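/- Let u ∈ ℝ^C with C ≥ 2, let j* be an index attaining the maximum of u, and let s = softmax(u). Then ‖s − e_{j*}‖₂ ≤ √2 · (C − 1) · exp(−gap(u)). -/

import Mathlib

/-!
Write `s = softmax u` and let `T = ∑_{j ≠ j*} s j` be the mass off the maximizer. Since `s` sums
to `1`, the entry of `s - e_{j*}` at `j*` is `-T`, and the other entries are nonnegative with sum
`T`, so their squares sum to at most `T ^ 2`. Hence `‖s - e_{j*}‖² ≤ 2 T ^ 2`. Bounding the
normalizing sum below by `exp (u j*)` gives `s j ≤ exp (u j - u j*) ≤ exp (-gap)` for each of the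
`C - 1` indices `j ≠ j*`, so `T ≤ (C - 1) exp (-gap)`.
-/

/-- The softmax map: `softmax u j = exp(u j) / Σₖ exp(u k)`. -/
noncomputable def softmax {m : ℕ} (u : Fin m → ℝ) : Fin m → ℝ :=
  fun j => Real.exp (u j) / ∑ k, Real.exp (u k)

/-- The gap of `u` at a maximizing index `jstar`:
`gap u jstar = u jstar − max_{j ≠ jstar} u j`. -/
noncomputable def gap {m : ℕ} (u : Fin m → ℝ) (jstar : Fin m) : ℝ :=
  u jstar - sSup (u '' {j | j ≠ jstar})

theorem softmax_nonneg {m : ℕ} (u : Fin m → ℝ) (j : Fin m) : 0 ≤ softmax u j := by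
  unfold softmax
  positivity

theorem sum_softmax {m : ℕ} (u : Fin m → ℝ) (i : Fin m) : ∑ j, softmax u j = 1 := by
  have hpos : 0 < ∑ k, Real.exp (u k) :=
    Finset.sum_pos (fun k _ => Real.exp_pos _) ⟨i, Finset.mem_univ i⟩
  unfold softmax
  rw [← Finset.sum_div, div_self hpos.ne']

/-- Holds for any index `i`: drop all terms but `exp (u i)` from the normalizing sum. -/
theorem softmax_le_exp_neg_gap {m : ℕ} (u : Fin m → ℝ) {i j : Fin m} (hj : j ≠ i) :
    softmax u j ≤ Real.exp (-(gap u i)) := by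
  have hS : Real.exp (u i) ≤ ∑ k, Real.exp (u k) :=
    Finset.single_le_sum (f := fun k => Real.exp (u k)) (fun k _ => (Real.exp_pos _).le)
      (Finset.mem_univ i)
  have hsup : u j ≤ sSup (u '' {j | j ≠ i}) :=
    le_csSup (Set.toFinite _).bddAbove ⟨j, hj, rfl⟩
  calc softmax u j ≤ Real.exp (u j) / Real.exp (u i) :=
        div_le_div_of_nonneg_left (Real.exp_pos _).le (Real.exp_pos _) hS
    _ = Real.exp (u j - u i) := (Real.exp_sub _ _).symm
    _ ≤ Real.exp (-(gap u i)) := by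
        apply Real.exp_le_exp.mpr
        unfold gap
        linarith

/-- **Distance of softmax to the one-hot vector at the maximizer.** For `C ≥ 2`, a
maximizer `j*` of `u`, and `s = softmax u`:
`‖s − e_{j*}‖₂ ≤ √2 · (C − 1) · exp(−gap(u))`. -/
theorem softmax_one_hot_dist {C : ℕ} (hC : 2 ≤ C) (u : Fin C → ℝ) (jstar : Fin C)
    (hmax : ∀ j, u j ≤ u jstar) :
    Real.sqrt (∑ j, (softmax u j - (if j = jstar then (1 : ℝ) else 0)) ^ 2)
      ≤ Real.sqrt 2 * ((C : ℝ) - 1) * Real.exp (-(gap u jstar)) := by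
  set T := ∑ j ∈ Finset.univ.erase jstar, softmax u j with hT
  have hsplit : softmax u jstar + T = 1 := by
    rw [hT, Finset.add_sum_erase _ _ (Finset.mem_univ jstar), sum_softmax u jstar]
  have hT_le : T ≤ ((C : ℝ) - 1) * Real.exp (-(gap u jstar)) := by
    have h := Finset.sum_le_card_nsmul (Finset.univ.erase jstar) (softmax u)
      (Real.exp (-(gap u jstar)))
      (fun j hj => softmax_le_exp_neg_gap u (Finset.ne_of_mem_erase hj))
    rw [Finset.card_erase_of_mem (Finset.mem_univ _), Finset.card_univ, Fintype.card_fin,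
      nsmul_eq_mul, Nat.cast_sub (by omega), Nat.cast_one] at h
    exact h
  have hT0 : 0 ≤ T := Finset.sum_nonneg fun j _ => softmax_nonneg u j
  have hoff : ∑ j ∈ Finset.univ.erase jstar,
      (softmax u j - (if j = jstar then (1 : ℝ) else 0)) ^ 2 ≤ T ^ 2 := by
    rw [Finset.sum_congr rfl fun j hj => by
      rw [if_neg (Finset.ne_of_mem_erase hj), sub_zero]]
    exact Finset.sum_sq_le_sq_sum_of_nonneg fun j _ => softmax_nonneg u j
  have hsq : ∑ j, (softmax u j - (if j = jstar then (1 : ℝ) else 0)) ^ 2 ≤ 2 * T ^ 2 := by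
    rw [← Finset.add_sum_erase _ _ (Finset.mem_univ jstar), if_pos rfl,
      show softmax u jstar - 1 = -T by linarith]
    linarith [neg_sq T]
  calc Real.sqrt (∑ j, (softmax u j - (if j = jstar then (1 : ℝ) else 0)) ^ 2)
      ≤ Real.sqrt (2 * T ^ 2) := Real.sqrt_le_sqrt hsq
    _ = Real.sqrt 2 * T := by rw [Real.sqrt_mul zero_le_two, Real.sqrt_sq hT0]
    _ ≤ Real.sqrt 2 * (((C : ℝ) - 1) * Real.exp (-(gap u jstar))) := by gcongr
    _ = Real.sqrt 2 * ((C : ℝ) - 1) * Real.exp (-(gap u jstar)) := (mul_assoc _ _ _).symm
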